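/- (Uniform-norm error for nonlocal problems with symmetric polygonal interaction neighborhoods.) Let Ω ⊂ ℝ² be bounded and open, let δ₀ ∈ (0,1], μ ∈ {0,1}, and A, B, M > 0. Then there is a constant C > 0, depending only on Ω, δ₀, A, B, M, with the following property. Let δ ∈ (0,δ₀] and r ∈ [δ/2, δ], let γ̃ satisfy the radial kernel conditions with horizon δ in dimension 2 and ∫_{B_δ(0)} γ̃(|z|) dz < ∞, and set D := ∫_{r ≤ |z| ≤ δ} |z|² γ̃(|z|) dz; assume D ≤ 1/2. Let k : Ω̂_δ × Ω̂_δ → [0,∞) be measurable such that for every x ∈ Ω there is a measurable, symmetric weight m_x : ℝ² → [0,1] (m_x(−z) = m_x(z)) with m_x(z) = 1 for |z| ≤ r, m_x(z) = 0 for |z| ≥ δ, and k(x, x+z) = γ̃(|z|) m_x(z) for almost every z. Let u₀ : ℝ² → ℝ be four times continuously differentiable on an open neighborhood of the closure of Ω̂_δ with ‖D^j u₀(y)‖ ≤ M for all y ∈ Ω̂_δ and j = 0,…,4, and set f₀ = −Δu₀ on Ω. Let f_δ : Ω → ℝ satisfy sup_Ω |f_δ − f₀| ≤ A δ², let g_δ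 : Ω_δ^c → ℝ satisfy sup_{Ω_δ^c} |g_δ − u₀| ≤ B δ^{2+μ}, and let u : Ω̂_δ → ℝ be bounded and measurable with −2∫_{Ω̂_δ} (u(y) − u(x)) k(x,y) dy = f_δ(x) for every x ∈ Ω and u = g_δ on Ω_δ^c. Then sup_{x∈Ω} |u(x) − u₀(x)| ≤ C (δ² + D). -/

import Mathlib

open MeasureTheory Metric Set

noncomputable section

/-- Surface measure of the unit sphere in `ℝ^d`, expressed as `d` times the volume
of the unit ball. -/
def unitSphereArea (d : ℕ) : ℝ :=
  d * (volume (ball (0 : EuclideanSpace ℝ (Fin d)) 1)).toReal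

/-- The radial kernel conditions with horizon `δ` in dimension `d`. -/
def RadialKernel (d : ℕ) (δ : ℝ) (γ : ℝ → ℝ) : Prop :=
  Measurable γ ∧ (∀ s, 0 < s → s < δ → 0 < γ s) ∧ (∀ s, δ ≤ s → γ s = 0) ∧
    IntegrableOn γ (Ioo 0 δ) ∧
    unitSphereArea d * (∫ s in Ioo 0 δ, s ^ (d + 1) * γ s) = d

/-- The part of the complement of `Ω` within distance `δ` of the boundary. -/
def omegaC {d : ℕ} (Ω : Set (EuclideanSpace ℝ (Fin d))) (δ : ℝ) :
    Set (EuclideanSpace ℝ (Fin d)) :=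
  {y | y ∉ Ω ∧ infDist y (frontier Ω) < δ}

/-- `Ω̂_δ = Ω ∪ Ω_δ^c`. -/
def hatΩ {d : ℕ} (Ω : Set (EuclideanSpace ℝ (Fin d))) (δ : ℝ) :
    Set (EuclideanSpace ℝ (Fin d)) :=
  Ω ∪ omegaC Ω δ

/-- The Laplacian of `u : ℝ^d → ℝ`, as the trace of the second derivative. -/
def lap (d : ℕ) (u : EuclideanSpace ℝ (Fin d) → ℝ) (x : EuclideanSpace ℝ (Fin d)) : ℝ :=
  ∑ i : Fin d, iteratedFDeriv ℝ 2 u x ![EuclideanSpace.single i 1, EuclideanSpace.single i 1]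

/-!
Extend `u` and `u₀` by zero outside `Ω̂_δ`. Because the kernel is even, the nonlocal operator sees
only second differences: the odd Taylor terms of `u₀` cancel, the quadratic term reproduces `Δu₀`
through the normalised second moment of `γ̃`, and the quartic remainder is `O(δ²)`. Cutting the
kernel off between the radii `r` and `δ` changes the quadratic term by at most a multiple of `D`.
So the error `u - u₀` solves a nonlocal equation with right-hand side `O(δ² + D)` and exterior data
`O(δ²)`. On `‖y‖²` the operator is at least `2 (d - D)`, which is bounded away from zero since
`D` stays below `d`; comparing the error with a multiple of this function by the maximum principle
gives the estimate.
-/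

section NonlocalOperator

variable {E : Type*} [MeasurableSpace E]

/-- Bounded measurable functions. The bound is pointwise rather than essential, because the maximum
principle argues with the actual supremum. -/
structure BoundedMeasurable (φ : E → ℝ) : Prop where
  measurable : Measurable φ
  exists_abs_le : ∃ N, ∀ x, |φ x| ≤ N

namespace BoundedMeasurable

variable {φ ψ : E → ℝ}

lemma neg (hφ : BoundedMeasurable φ) : BoundedMeasurable (-φ) :=
  ⟨hφ.measurable.neg, by simpa only [Pi.neg_apply, abs_neg] using hφ.exists_abs_le⟩

lemma add (hφ : BoundedMeasurable φ) (hψ : BoundedMeasurable ψ) : BoundedMeasurable (φ + ψ) := by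
  obtain ⟨N, hN⟩ := hφ.exists_abs_le
  obtain ⟨N', hN'⟩ := hψ.exists_abs_le
  exact ⟨hφ.measurable.add hψ.measurable, N + N',
    fun x => (abs_add_le _ _).trans (add_le_add (hN x) (hN' x))⟩

lemma sub (hφ : BoundedMeasurable φ) (hψ : BoundedMeasurable ψ) : BoundedMeasurable (φ - ψ) :=
  sub_eq_add_neg φ ψ ▸ hφ.add hψ.neg

lemma const_smul (hφ : BoundedMeasurable φ) (c : ℝ) : BoundedMeasurable (c • φ) := by
  obtain ⟨N, hN⟩ := hφ.exists_abs_le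
  refine ⟨hφ.measurable.const_smul c, |c| * N, fun x => ?_⟩
  rw [Pi.smul_apply, smul_eq_mul, abs_mul]
  exact mul_le_mul_of_nonneg_left (hN x) (abs_nonneg c)

lemma bddAbove_range (hφ : BoundedMeasurable φ) : BddAbove (range φ) := by
  obtain ⟨N, hN⟩ := hφ.exists_abs_le
  exact ⟨N, forall_mem_range.2 fun x => (le_abs_self _).trans (hN x)⟩

lemma indicator {s : Set E} {u : E → ℝ} (hs : MeasurableSet s) (hu : Measurable u)
    (hb : ∃ N, ∀ x ∈ s, |u x| ≤ N) : BoundedMeasurable (s.indicator u) := by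
  obtain ⟨N, hN⟩ := hb
  refine ⟨hu.indicator hs, |N|, fun x => ?_⟩
  by_cases hx : x ∈ s
  · simpa only [indicator_of_mem hx] using (hN x hx).trans (le_abs_self N)
  · simp only [indicator_of_notMem hx, abs_zero, abs_nonneg]

lemma indicator_of_continuousOn_closure [TopologicalSpace E] [BorelSpace E] {s : Set E}
    {u : E → ℝ} (hs : MeasurableSet s) (hc : IsCompact (closure s))
    (hu : ContinuousOn u (closure s)) : BoundedMeasurable (s.indicator u) := by
  classical
  have hmeas : Measurable (s.indicator u) := by
    rw [← piecewise_eq_indicator]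
    exact (hu.mono subset_closure).measurable_piecewise continuousOn_const hs
  obtain ⟨N, hN⟩ := hc.exists_bound_of_continuousOn hu
  rw [← indicator_eq_self.2 (support_indicator_subset (s := s) (f := u))]
  refine indicator hs hmeas ⟨N, fun x hx => ?_⟩
  rw [indicator_of_mem hx]
  exact hN x (subset_closure hx)

lemma integrable_increment_mul [Add E] [MeasurableAdd E] {ν : Measure E} {w : E → ℝ}
    (hφ : BoundedMeasurable φ) (hw : Integrable w ν) (x : E) :
    Integrable (fun z => (φ (x + z) - φ x) * w z) ν := by
  obtain ⟨N, hN⟩ := hφ.exists_abs_le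
  exact hw.bdd_mul (c := N + N)
    ((hφ.measurable.comp (measurable_const_add x)).sub_const _).aestronglyMeasurable
    (.of_forall fun z => (norm_sub_le _ _).trans (add_le_add (hN _) (hN _)))

end BoundedMeasurable

/-- The nonlocal diffusion operator `φ ↦ 2 ∫ (φ(y) - φ(x)) k(x, y) dy`, written in the displacement
variable `z = y - x` with `w z = k(x, x + z)`. -/
def nonlocalLap [Add E] (ν : Measure E) (w φ : E → ℝ) (x : E) : ℝ :=
  2 * ∫ z, (φ (x + z) - φ x) * w z ∂ν

/-- A weight `w` giving the intensity `w z` of a jump by `z`, of total mass at most `K`. -/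
structure JumpWeight (ν : Measure E) (K : ℝ) (w : E → ℝ) : Prop where
  integrable : Integrable w ν
  nonneg : 0 ≤ᵐ[ν] w
  mass_le : ∫ z, w z ∂ν ≤ K

section Linearity

variable [Add E] {ν : Measure E} {w φ ψ : E → ℝ}

lemma nonlocalLap_neg (x : E) : nonlocalLap ν w (-φ) x = -nonlocalLap ν w φ x := by
  simp only [nonlocalLap, Pi.neg_apply, ← neg_sub', neg_mul, integral_neg, mul_neg]

lemma nonlocalLap_const_smul (c : ℝ) (x : E) :
    nonlocalLap ν w (c • φ) x = c * nonlocalLap ν w φ x := by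
  simp only [nonlocalLap, Pi.smul_apply, smul_eq_mul, ← mul_sub, mul_assoc, integral_const_mul]
  ring

variable [MeasurableAdd E]

lemma nonlocalLap_add (hw : Integrable w ν) (hφ : BoundedMeasurable φ) (hψ : BoundedMeasurable ψ)
    (x : E) : nonlocalLap ν w (φ + ψ) x = nonlocalLap ν w φ x + nonlocalLap ν w ψ x := by
  simp only [nonlocalLap]
  rw [← mul_add, ← integral_add (hφ.integrable_increment_mul hw x)
    (hψ.integrable_increment_mul hw x)]
  congr 2 with z
  simp only [Pi.add_apply]
  ring

lemma nonlocalLap_sub (hw : Integrable w ν) (hφ : BoundedMeasurable φ) (hψ : BoundedMeasurable ψ)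
    (x : E) : nonlocalLap ν w (φ - ψ) x = nonlocalLap ν w φ x - nonlocalLap ν w ψ x := by
  rw [sub_eq_add_neg, nonlocalLap_add hw hφ hψ.neg, nonlocalLap_neg, ← sub_eq_add_neg]

end Linearity

section MaximumPrinciple

variable [Add E] [MeasurableAdd E] {ν : Measure E} {K b : ℝ} {Ω : Set E}

lemma JumpWeight.nonlocalLap_le {w φ : E → ℝ} (hw : JumpWeight ν K w) (hφ : BoundedMeasurable φ)
    {S : ℝ} (hS : ∀ y, φ y ≤ S) (x : E) : nonlocalLap ν w φ x ≤ 2 * K * (S - φ x) := by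
  have hint : ∫ z, (φ (x + z) - φ x) * w z ∂ν ≤ ∫ z, (S - φ x) * w z ∂ν := by
    refine integral_mono_ae (hφ.integrable_increment_mul hw.integrable x)
      (hw.integrable.const_mul _) ?_
    filter_upwards [hw.nonneg] with z hz
    exact mul_le_mul_of_nonneg_right (sub_le_sub_right (hS _) _) hz
  have hmass : (S - φ x) * ∫ z, w z ∂ν ≤ (S - φ x) * K :=
    mul_le_mul_of_nonneg_left hw.mass_le (sub_nonneg.2 (hS x))
  rw [integral_const_mul] at hint
  rw [nonlocalLap]
  linarith

variable {w : E → E → ℝ} (hw : ∀ x ∈ Ω, JumpWeight ν K (w x))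
include hw

theorem le_of_pos_le_nonlocalLap {φ : E → ℝ} (hφ : BoundedMeasurable φ) {c : ℝ} (hc : 0 < c)
    (hL : ∀ x ∈ Ω, c ≤ nonlocalLap ν (w x) φ x) (hout : ∀ x ∉ Ω, φ x ≤ b) (x : E) : φ x ≤ b := by
  set S := ⨆ y, φ y
  have hle : ∀ y, φ y ≤ S := le_ciSup hφ.bddAbove_range
  by_contra! hbx
  set η := c / (2 * |K| + 1)
  have hη : 0 < η := by positivity
  -- The supremum need not be attained, but the mass bound is uniform in `x`, so a point where `φ`
  -- is within `η` of it is as good as a maximum.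
  have : Nonempty E := ⟨x⟩
  obtain ⟨y, hy⟩ : ∃ y, max b (S - η) < φ y :=
    exists_lt_of_lt_ciSup (max_lt (hbx.trans_le (hle x)) (sub_lt_self S hη))
  have hyΩ : y ∈ Ω := by
    by_contra hyΩ
    exact (hout y hyΩ).not_gt ((le_max_left _ _).trans_lt hy)
  have hgap : S - φ y ≤ η := by linarith [(le_max_right b (S - η)).trans_lt hy]
  have : c < c := calc
    c ≤ 2 * K * (S - φ y) := (hL y hyΩ).trans ((hw y hyΩ).nonlocalLap_le hφ hle y)
    _ ≤ 2 * |K| * η := by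
      gcongr
      · exact sub_nonneg.2 (hle y)
      · exact le_abs_self K
    _ < (2 * |K| + 1) * η := by linarith
    _ = c := mul_div_cancel₀ c (by positivity)
  exact this.false

theorem le_add_mul_of_neg_le_nonlocalLap {e ψ : E → ℝ} {T S : ℝ} (he : BoundedMeasurable e)
    (hψ : BoundedMeasurable ψ) (hψS : ∀ x, ψ x ∈ Icc 0 S) (hT : 0 ≤ T)
    (hLψ : ∀ x ∈ Ω, 1 ≤ nonlocalLap ν (w x) ψ x) (hLe : ∀ x ∈ Ω, -T ≤ nonlocalLap ν (w x) e x)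
    (hout : ∀ x ∉ Ω, e x ≤ b) (x : E) : e x ≤ b + T * S := by
  have hpert : ∀ ε > 0, e x ≤ b + (T + ε) * S := fun ε hε => by
    have hmax : (e + (T + ε) • ψ) x ≤ b + (T + ε) * S := by
      refine le_of_pos_le_nonlocalLap hw (he.add (hψ.const_smul _)) hε (fun y hy => ?_)
        (fun y hy => ?_) x
      · rw [nonlocalLap_add (hw y hy).integrable he (hψ.const_smul _), nonlocalLap_const_smul]
        linarith [hLe y hy, le_mul_of_one_le_right (by positivity : 0 ≤ T + ε) (hLψ y hy)]
      · exact add_le_add (hout y hy) (mul_le_mul_of_nonneg_left (hψS y).2 (by positivity))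
    have hnonneg : 0 ≤ (T + ε) * ψ x := mul_nonneg (by positivity) (hψS x).1
    simp only [Pi.add_apply, Pi.smul_apply, smul_eq_mul] at hmax
    linarith
  have hlim : Filter.Tendsto (fun ε => b + (T + ε) * S) (nhdsWithin 0 (Ioi 0))
      (nhds (b + T * S)) :=
    (Continuous.tendsto' (by fun_prop) _ _ (by simp only [add_zero])).mono_left nhdsWithin_le_nhds
  exact ge_of_tendsto hlim (eventually_mem_nhdsWithin.mono hpert)

theorem abs_le_add_mul_of_abs_nonlocalLap_le {e ψ : E → ℝ} {T S : ℝ} (he : BoundedMeasurable e)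
    (hψ : BoundedMeasurable ψ) (hψS : ∀ x, ψ x ∈ Icc 0 S) (hT : 0 ≤ T)
    (hLψ : ∀ x ∈ Ω, 1 ≤ nonlocalLap ν (w x) ψ x) (hLe : ∀ x ∈ Ω, |nonlocalLap ν (w x) e x| ≤ T)
    (hout : ∀ x ∉ Ω, |e x| ≤ b) (x : E) : |e x| ≤ b + T * S := by
  refine abs_le'.2 ⟨?_, ?_⟩
  · exact le_add_mul_of_neg_le_nonlocalLap hw he hψ hψS hT hLψ
      (fun y hy => (abs_le.1 (hLe y hy)).1) (fun y hy => (abs_le'.1 (hout y hy)).1) x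
  · refine le_add_mul_of_neg_le_nonlocalLap hw he.neg hψ hψS hT hLψ (fun y hy => ?_)
      (fun y hy => (abs_le'.1 (hout y hy)).2) x
    rw [nonlocalLap_neg]
    exact neg_le_neg (abs_le.1 (hLe y hy)).2

end MaximumPrinciple

section ChangeOfVariables

variable [AddGroup E] [MeasurableAdd E] {ν : Measure E}

lemma two_mul_setIntegral_eq_nonlocalLap [ν.IsAddLeftInvariant] {s : Set E} (hs : MeasurableSet s)
    {u k w : E → ℝ} {x : E} (hx : x ∈ s) (hk : ∀ᵐ z ∂ν, k (x + z) = w z)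
    (hw : ∀ z, x + z ∉ s → w z = 0) :
    2 * ∫ y in s, (u y - u x) * k y ∂ν = nonlocalLap ν w (s.indicator u) x := by
  rw [nonlocalLap, ← integral_indicator hs, ← integral_add_left_eq_self _ x]
  congr 1
  refine integral_congr_ae ?_
  filter_upwards [hk] with z hz
  by_cases hxz : x + z ∈ s
  · simp only [indicator_of_mem hxz, indicator_of_mem hx, hz]
  · simp only [indicator_of_notMem hxz, hw z hxz, mul_zero]

section SecondDifference

variable [MeasurableNeg E] [ν.IsNegInvariant] {w φ : E → ℝ} (hw : Integrable w ν)
  (heven : ∀ z, w (-z) = w z) (hφ : BoundedMeasurable φ) (x : E)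
include hw heven hφ

lemma integrable_secondDifference_mul :
    Integrable (fun z => (φ (x + z) + φ (x - z) - 2 * φ x) * w z) ν := by
  have hint := hφ.integrable_increment_mul hw x
  refine (hint.add hint.comp_neg).congr (.of_forall fun z => ?_)
  simp only [Pi.add_apply, heven, ← sub_eq_add_neg x z]
  ring

lemma nonlocalLap_eq_integral_secondDifference :
    nonlocalLap ν w φ x = ∫ z, (φ (x + z) + φ (x - z) - 2 * φ x) * w z ∂ν := by
  have hint := hφ.integrable_increment_mul hw x
  rw [nonlocalLap, two_mul]
  nth_rw 2 [← integral_neg_eq_self]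
  rw [← integral_add hint hint.comp_neg]
  congr 1 with z
  rw [heven, ← sub_eq_add_neg x z]
  ring

end SecondDifference

end ChangeOfVariables

end NonlocalOperator

section TaylorExpansion

variable {E F : Type*} [NormedAddCommGroup E] [NormedSpace ℝ E] [NormedAddCommGroup F]
  [NormedSpace ℝ F] [CompleteSpace F] {f : E → F} {x : E} {M : ℝ}

open scoped Nat in
theorem norm_sub_taylorSum_le {n : ℕ} {y : E}
    (hf : ∀ t ∈ Icc (0 : ℝ) 1, ContDiffAt ℝ (n + 1) f (x + t • y))
    (hM : ∀ t ∈ Icc (0 : ℝ) 1, ‖iteratedFDeriv ℝ (n + 1) f (x + t • y)‖ ≤ M) :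
    ‖f (x + y) - ∑ k ∈ Finset.range (n + 1), (k ! : ℝ)⁻¹ • iteratedFDeriv ℝ k f x fun _ => y‖ ≤
      (n ! : ℝ)⁻¹ * (M * ‖y‖ ^ (n + 1)) := by
  rw [map_add_eq_sum_add_integral_iteratedFDeriv hf, add_sub_cancel_left, norm_smul,
    Real.norm_of_nonneg (by positivity : (0 : ℝ) ≤ (n ! : ℝ)⁻¹)]
  gcongr
  have hbound : ∀ t ∈ uIoc (0 : ℝ) 1,
      ‖(1 - t) ^ n • iteratedFDeriv ℝ (n + 1) f (x + t • y) fun _ => y‖ ≤ M * ‖y‖ ^ (n + 1) := by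
    rw [uIoc_of_le zero_le_one]
    rintro t ⟨ht0, ht1⟩
    have hD : ‖iteratedFDeriv ℝ (n + 1) f (x + t • y) fun _ => y‖ ≤ M * ‖y‖ ^ (n + 1) := by
      simpa only [Finset.prod_const, Finset.card_univ, Fintype.card_fin] using
        ContinuousMultilinearMap.le_of_opNorm_le (hM t ⟨ht0.le, ht1⟩) fun _ => y
    rw [norm_smul, Real.norm_of_nonneg (pow_nonneg (sub_nonneg.2 ht1) n)]
    exact (mul_le_of_le_one_left (norm_nonneg _)
      (pow_le_one₀ (sub_nonneg.2 ht1) (by linarith))).trans hD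
  simpa only [sub_zero, abs_one, mul_one] using
    intervalIntegral.norm_integral_le_of_norm_le_const hbound

theorem norm_secondDifference_sub_le {z : E}
    (hf : ∀ t ∈ Icc (-1 : ℝ) 1, ContDiffAt ℝ 4 f (x + t • z))
    (hM : ∀ t ∈ Icc (-1 : ℝ) 1, ‖iteratedFDeriv ℝ 4 f (x + t • z)‖ ≤ M) :
    ‖f (x + z) + f (x - z) - (2 : ℝ) • f x - iteratedFDeriv ℝ 2 f x fun _ => z‖ ≤
      M / 3 * ‖z‖ ^ 4 := by
  have hneg : ∀ t ∈ Icc (0 : ℝ) 1, -t ∈ Icc (-1 : ℝ) 1 := fun t ht =>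
    ⟨neg_le_neg ht.2, by linarith [ht.1]⟩
  have hpos : ∀ t ∈ Icc (0 : ℝ) 1, t ∈ Icc (-1 : ℝ) 1 := fun t ht => ⟨by linarith [ht.1], ht.2⟩
  have hplus := norm_sub_taylorSum_le (n := 3) (fun t ht => hf t (hpos t ht))
    (fun t ht => hM t (hpos t ht))
  have hminus := norm_sub_taylorSum_le (n := 3) (y := -z)
    (fun t ht => smul_neg t z ▸ neg_smul t z ▸ hf (-t) (hneg t ht))
    (fun t ht => smul_neg t z ▸ neg_smul t z ▸ hM (-t) (hneg t ht))
  have hodd : ∀ k, (iteratedFDeriv ℝ k f x fun _ => -z) =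
      (-1 : ℝ) ^ k • iteratedFDeriv ℝ k f x fun _ => z := fun k => by
    simpa using (iteratedFDeriv ℝ k f x).map_smul_univ (fun _ => -1) fun _ => z
  have hsum : f (x + z) + f (x - z) - (2 : ℝ) • f x - (iteratedFDeriv ℝ 2 f x fun _ => z) =
      (f (x + z) - ∑ k ∈ Finset.range 4, (k.factorial : ℝ)⁻¹ • iteratedFDeriv ℝ k f x fun _ => z) +
      (f (x + -z) -
        ∑ k ∈ Finset.range 4, (k.factorial : ℝ)⁻¹ • iteratedFDeriv ℝ k f x fun _ => -z) := by
    simp only [hodd, Finset.sum_range_succ, Finset.sum_range_zero, Nat.factorial,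
      iteratedFDeriv_zero_apply, sub_eq_add_neg x z]
    module
  rw [hsum]
  refine (norm_add_le_of_le hplus hminus).trans_eq ?_
  rw [norm_neg, show Nat.factorial 3 = 6 from rfl]
  push_cast
  ring

end TaylorExpansion

section RadialMoments

variable {E : Type*} [NormedAddCommGroup E] [InnerProductSpace ℝ E] [MeasurableSpace E]
  [BorelSpace E] [FiniteDimensional ℝ E] {γ : ℝ → ℝ}

lemma integral_inner_sq_mul_norm_congr {v w : E} (h : ‖v‖ = ‖w‖) :
    ∫ z, inner ℝ v z ^ 2 * γ ‖z‖ = ∫ z, inner ℝ w z ^ 2 * γ ‖z‖ := by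
  set ρ := (ℝ ∙ (v - w))ᗮ.reflection
  have hρ : ∀ z, inner ℝ v (ρ z) = inner ℝ w z := fun z => by
    rw [← ρ.inner_map_map, Submodule.reflection_reflection, Submodule.reflection_sub h]
  rw [← ρ.measurePreserving.integral_comp ρ.toHomeomorph.measurableEmbedding]
  simp only [hρ, ρ.norm_map]

variable (hγ : ∀ v w : E, Integrable fun z => inner ℝ v z * inner ℝ w z * γ ‖z‖)
include hγ

lemma integral_inner_mul_inner_mul_norm_eq_zero {v w : E} (h : inner ℝ v w = 0) :
    ∫ z, inner ℝ v z * inner ℝ w z * γ ‖z‖ = 0 := by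
  have hpol : ∀ z : E, inner ℝ v z * inner ℝ w z * γ ‖z‖ =
      4⁻¹ * (inner ℝ (v + w) z ^ 2 * γ ‖z‖ - inner ℝ (v - w) z ^ 2 * γ ‖z‖) := fun z => by
    rw [inner_add_left, inner_sub_left]
    ring
  have hsq : ∀ v : E, Integrable fun z => inner ℝ v z ^ 2 * γ ‖z‖ := fun v => by
    simpa only [sq] using hγ v v
  have hnorm : ‖v + w‖ = ‖v - w‖ := by
    rw [norm_sub_rev, add_comm, norm_sub_eq_norm_add h]
  simp only [hpol]
  rw [integral_const_mul, integral_sub (hsq _) (hsq _), integral_inner_sq_mul_norm_congr hnorm,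
    sub_self, mul_zero]

variable {ι : Type*} [Fintype ι] (b : OrthonormalBasis ι ℝ E)

lemma card_mul_integral_inner_sq_mul_norm (i : ι) :
    Fintype.card ι * ∫ z, inner ℝ (b i) z ^ 2 * γ ‖z‖ = ∫ z : E, ‖z‖ ^ 2 * γ ‖z‖ := by
  have hnorm : ∀ j, ‖b j‖ = ‖b i‖ := fun j => by simp only [b.norm_eq_one]
  calc Fintype.card ι * ∫ z, inner ℝ (b i) z ^ 2 * γ ‖z‖
    _ = ∑ j, ∫ z, inner ℝ (b j) z ^ 2 * γ ‖z‖ := by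
      simp only [integral_inner_sq_mul_norm_congr (hnorm _), Finset.sum_const, Finset.card_univ,
        nsmul_eq_mul]
    _ = ∫ z : E, ‖z‖ ^ 2 * γ ‖z‖ := by
      rw [← integral_finsetSum _ fun j _ => by simpa only [sq] using hγ (b j) (b j)]
      simp only [← Finset.sum_mul, b.sum_sq_inner_right]

theorem card_mul_integral_bilin_mul_norm (L : E →L[ℝ] E →L[ℝ] ℝ) :
    Fintype.card ι * ∫ z, L z z * γ ‖z‖ = (∑ i, L (b i) (b i)) * ∫ z : E, ‖z‖ ^ 2 * γ ‖z‖ := by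
  classical
  have hL : ∀ z, L z z * γ ‖z‖ =
      ∑ i, ∑ j, L (b j) (b i) * (inner ℝ (b i) z * inner ℝ (b j) z * γ ‖z‖) := fun z => by
    conv_lhs => enter [1]; rw [← b.sum_repr' z]
    simp only [map_sum, sum_apply, map_smul, smul_apply, smul_eq_mul,
      Finset.sum_mul, Finset.mul_sum]
    exact Finset.sum_congr rfl fun i _ => Finset.sum_congr rfl fun j _ => by ring
  have hint : ∀ i j,
      Integrable fun z => L (b j) (b i) * (inner ℝ (b i) z * inner ℝ (b j) z * γ ‖z‖) :=
    fun i j => (hγ _ _).const_mul _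
  have horth : ∀ i j, ∫ z, L (b j) (b i) * (inner ℝ (b i) z * inner ℝ (b j) z * γ ‖z‖) =
      if i = j then L (b i) (b i) * ∫ z, inner ℝ (b i) z ^ 2 * γ ‖z‖ else 0 := fun i j => by
    rw [integral_const_mul]
    split_ifs with hij
    · simp only [← hij, sq]
    · rw [integral_inner_mul_inner_mul_norm_eq_zero hγ (b.inner_eq_zero hij), mul_zero]
  simp only [hL]
  rw [integral_finsetSum _ fun i _ => integrable_finsetSum _ fun j _ => hint i j]
  simp only [integral_finsetSum _ fun j _ => hint _ j, horth, Finset.sum_ite_eq, Finset.mem_univ,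
    if_true, Finset.mul_sum, Finset.sum_mul]
  refine Finset.sum_congr rfl fun i _ => ?_
  rw [mul_left_comm, card_mul_integral_inner_sq_mul_norm hγ b i]

end RadialMoments

section TruncatedKernel

variable {E : Type*} [NormedAddCommGroup E] [MeasurableSpace E] {ν : Measure E} {G m : E → ℝ}
  {r δ K P : ℝ}

/-- Even nonnegative integrable kernels with horizon `δ`. Nonnegativity is only required almost
everywhere, since `z = 0` is unconstrained for a radial profile on `(0, ∞)`. -/
structure EvenKernel (ν : Measure E) (δ : ℝ) (G : E → ℝ) : Prop where
  integrable : Integrable G ν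
  nonneg : 0 ≤ᵐ[ν] G
  neg : ∀ z, G (-z) = G z
  eq_zero_of_le_norm : ∀ z, δ ≤ ‖z‖ → G z = 0

/-- The weights `m_x` that describe a symmetric (for instance polygonal) interaction neighbourhood
containing the ball of radius `r`. -/
structure SymmetricCutoff (r : ℝ) (m : E → ℝ) : Prop where
  measurable : Measurable m
  mem_Icc : ∀ z, m z ∈ Icc 0 1
  neg : ∀ z, m (-z) = m z
  eq_one_of_norm_le : ∀ z, ‖z‖ ≤ r → m z = 1

/-- The second moment of `G` over the annulus `r ≤ ‖z‖ ≤ δ`, called `D` in the paper: the price of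
truncating `G` anywhere between the radii `r` and `δ`. -/
def annularMoment (ν : Measure E) (r δ : ℝ) (G : E → ℝ) : ℝ :=
  ∫ z in {z | r ≤ ‖z‖ ∧ ‖z‖ ≤ δ}, ‖z‖ ^ 2 * G z ∂ν

namespace EvenKernel

lemma annularMoment_nonneg (hG : EvenKernel ν δ G) : 0 ≤ annularMoment ν r δ G :=
  integral_nonneg_of_ae <| ae_restrict_of_ae <|
    hG.nonneg.mono fun _ hz => mul_nonneg (sq_nonneg _) hz

lemma integrable_norm_sq_mul [OpensMeasurableSpace E] (hG : EvenKernel ν δ G) :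
    Integrable (fun z => ‖z‖ ^ 2 * G z) ν := by
  refine (hG.integrable.norm.const_mul (δ ^ 2)).mono'
    ((measurable_norm.pow_const 2).aestronglyMeasurable.mul hG.integrable.aestronglyMeasurable)
    (.of_forall fun z => ?_)
  rw [norm_mul, norm_pow, norm_norm]
  rcases le_or_gt δ ‖z‖ with hz | hz
  · simp only [hG.eq_zero_of_le_norm z hz, norm_zero, mul_zero, le_refl]
  · gcongr

lemma integrable_mul [OpensMeasurableSpace E] (hG : EvenKernel ν δ G) {Q : E → ℝ}
    (hQ : Measurable Q) (hQP : ∀ z, |Q z| ≤ P * ‖z‖ ^ 2) : Integrable (fun z => Q z * G z) ν := by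
  refine (hG.integrable_norm_sq_mul.norm.const_mul P).mono'
    (hQ.aestronglyMeasurable.mul hG.integrable.aestronglyMeasurable) (.of_forall fun z => ?_)
  rw [norm_mul, norm_mul, norm_pow, norm_norm, ← mul_assoc]
  exact mul_le_mul_of_nonneg_right (hQP z) (norm_nonneg _)

lemma abs_integral_mul_le [OpensMeasurableSpace E] (hG : EvenKernel ν δ G) {F : E → ℝ}
    (hF : ∀ z, ‖z‖ < δ → |F z| ≤ K * ‖z‖ ^ 2) :
    |∫ z, F z * G z ∂ν| ≤ K * ∫ z, ‖z‖ ^ 2 * G z ∂ν := by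
  rw [← integral_const_mul, ← Real.norm_eq_abs]
  refine norm_integral_le_of_norm_le (hG.integrable_norm_sq_mul.const_mul K) ?_
  filter_upwards [hG.nonneg] with z hz
  rw [norm_mul, Real.norm_of_nonneg hz, ← mul_assoc]
  rcases le_or_gt δ ‖z‖ with hδ | hδ
  · simp only [hG.eq_zero_of_le_norm z hδ, mul_zero, le_refl]
  · exact mul_le_mul_of_nonneg_right (hF z hδ) hz

lemma mul_cutoff (hG : EvenKernel ν δ G) (hm : SymmetricCutoff r m) :
    EvenKernel ν δ fun z => G z * m z where
  integrable := hG.integrable.mul_bdd (c := 1) hm.measurable.aestronglyMeasurable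
    (.of_forall fun z => abs_le.2 ⟨by linarith [(hm.mem_Icc z).1], (hm.mem_Icc z).2⟩)
  nonneg := hG.nonneg.mono fun z hz => mul_nonneg hz (hm.mem_Icc z).1
  neg z := by rw [hG.neg, hm.neg]
  eq_zero_of_le_norm z hz := by rw [hG.eq_zero_of_le_norm z hz, zero_mul]

lemma mul_cutoff_le (hG : EvenKernel ν δ G) (hm : SymmetricCutoff r m) :
    (fun z => G z * m z) ≤ᵐ[ν] G :=
  hG.nonneg.mono fun z hz => mul_le_of_le_one_right hz (hm.mem_Icc z).2

lemma jumpWeight_mul_cutoff (hG : EvenKernel ν δ G) (hm : SymmetricCutoff r m) :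
    JumpWeight ν (∫ z, G z ∂ν) fun z => G z * m z where
  integrable := (hG.mul_cutoff hm).integrable
  nonneg := (hG.mul_cutoff hm).nonneg
  mass_le := integral_mono_ae (hG.mul_cutoff hm).integrable hG.integrable (hG.mul_cutoff_le hm)

variable [OpensMeasurableSpace E]

lemma integral_norm_sq_mul_cutoff_le (hG : EvenKernel ν δ G) (hm : SymmetricCutoff r m) :
    ∫ z, ‖z‖ ^ 2 * (G z * m z) ∂ν ≤ ∫ z, ‖z‖ ^ 2 * G z ∂ν :=
  integral_mono_ae (hG.mul_cutoff hm).integrable_norm_sq_mul hG.integrable_norm_sq_mul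
    ((hG.mul_cutoff_le hm).mono fun z hz => mul_le_mul_of_nonneg_left hz (sq_nonneg ‖z‖))

lemma abs_integral_mul_cutoff_sub_le (hG : EvenKernel ν δ G) (hm : SymmetricCutoff r m)
    {Q : E → ℝ} (hQ : Measurable Q) (hQP : ∀ z, |Q z| ≤ P * ‖z‖ ^ 2) :
    |∫ z, Q z * (G z * m z) ∂ν - ∫ z, Q z * G z ∂ν| ≤
      P * annularMoment ν r δ G := by
  have hS : MeasurableSet {z : E | r ≤ ‖z‖ ∧ ‖z‖ ≤ δ} :=
    (measurableSet_le measurable_const measurable_norm).inter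
      (measurableSet_le measurable_norm measurable_const)
  rw [← integral_sub ((hG.mul_cutoff hm).integrable_mul hQ hQP) (hG.integrable_mul hQ hQP),
    annularMoment, ← integral_const_mul, ← integral_indicator hS, ← Real.norm_eq_abs]
  refine norm_integral_le_of_norm_le ((hG.integrable_norm_sq_mul.const_mul P).indicator hS) ?_
  filter_upwards [hG.nonneg] with z hz
  by_cases hzS : z ∈ {z : E | r ≤ ‖z‖ ∧ ‖z‖ ≤ δ}
  · have hm1 : |m z - 1| ≤ 1 := abs_le.2 ⟨by linarith [(hm.mem_Icc z).1],
      by linarith [(hm.mem_Icc z).2]⟩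
    calc ‖Q z * (G z * m z) - Q z * G z‖ = |Q z| * G z * |m z - 1| := by
          rw [← abs_of_nonneg hz, ← abs_mul, ← abs_mul, abs_of_nonneg hz, Real.norm_eq_abs]
          ring_nf
      _ ≤ |Q z| * G z := mul_le_of_le_one_right (mul_nonneg (abs_nonneg _) hz) hm1
      _ ≤ P * ‖z‖ ^ 2 * G z := mul_le_mul_of_nonneg_right (hQP z) hz
      _ = _ := by rw [indicator_of_mem hzS, mul_assoc]
  · rw [indicator_of_notMem hzS, norm_le_zero_iff, sub_eq_zero]
    rcases lt_or_ge ‖z‖ r with hr | hr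
    · rw [hm.eq_one_of_norm_le z hr.le, mul_one]
    · rw [hG.eq_zero_of_le_norm z (not_le.1 fun h => hzS ⟨hr, h⟩).le, zero_mul]

end EvenKernel

theorem abs_nonlocalLap_mul_cutoff_sub_integral_le [BorelSpace E] [MeasurableAdd E]
    [ν.IsNegInvariant] (hG : EvenKernel ν δ G) (hm : SymmetricCutoff r m) {φ Q : E → ℝ}
    (hφ : BoundedMeasurable φ) (hQ : Measurable Q) (hQP : ∀ z, |Q z| ≤ P * ‖z‖ ^ 2) (hK : 0 ≤ K)
    {x : E} (hexp : ∀ z, ‖z‖ < δ → |φ (x + z) + φ (x - z) - 2 * φ x - Q z| ≤ K * ‖z‖ ^ 2) :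
    |nonlocalLap ν (fun z => G z * m z) φ x - ∫ z, Q z * G z ∂ν| ≤
      K * ∫ z, ‖z‖ ^ 2 * G z ∂ν + P * annularMoment ν r δ G := by
  have hGm := hG.mul_cutoff hm
  have hremainder := (hGm.abs_integral_mul_le hexp).trans
    (mul_le_mul_of_nonneg_left (hG.integral_norm_sq_mul_cutoff_le hm) hK)
  have hsplit : nonlocalLap ν (fun z => G z * m z) φ x - ∫ z, Q z * G z ∂ν =
      ∫ z, (φ (x + z) + φ (x - z) - 2 * φ x - Q z) * (G z * m z) ∂ν +
        (∫ z, Q z * (G z * m z) ∂ν - ∫ z, Q z * G z ∂ν) := by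
    rw [nonlocalLap_eq_integral_secondDifference hGm.integrable hGm.neg hφ]
    simp only [sub_mul _ (Q _)]
    rw [integral_sub (integrable_secondDifference_mul hGm.integrable hGm.neg hφ x)
      (hGm.integrable_mul hQ hQP)]
    ring
  rw [hsplit]
  exact (abs_add_le _ _).trans (add_le_add hremainder
    (hG.abs_integral_mul_cutoff_sub_le hm hQ hQP))

end TruncatedKernel

section Consistency

variable {E : Type*} [NormedAddCommGroup E] [MeasurableSpace E] [BorelSpace E] {ν : Measure E}
  [ν.IsNegInvariant] {G m φ : E → ℝ} {r δ M P : ℝ} {x : E}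

theorem abs_nonlocalLap_mul_cutoff_sub_integral_iteratedFDeriv_le [NormedSpace ℝ E]
    (hG : EvenKernel ν δ G) (hm : SymmetricCutoff r m) (hφ : BoundedMeasurable φ) {u : E → ℝ}
    (hφu : EqOn φ u (ball x δ)) (hu : ∀ y ∈ ball x δ, ContDiffAt ℝ 4 u y) (hM : 0 ≤ M)
    (hu4 : ∀ y ∈ ball x δ, ‖iteratedFDeriv ℝ 4 u y‖ ≤ M) (hu2 : ‖iteratedFDeriv ℝ 2 u x‖ ≤ P) :
    |nonlocalLap ν (fun z => G z * m z) φ x - ∫ z, (iteratedFDeriv ℝ 2 u x fun _ => z) * G z ∂ν| ≤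
      M / 3 * δ ^ 2 * ∫ z, ‖z‖ ^ 2 * G z ∂ν + P * annularMoment ν r δ G := by
  have hQ : Continuous fun z => iteratedFDeriv ℝ 2 u x fun _ => z := by fun_prop
  refine abs_nonlocalLap_mul_cutoff_sub_integral_le hG hm hφ hQ.measurable (fun z => ?_)
    (by positivity) fun z hz => ?_
  · simpa only [Finset.prod_const, Finset.card_univ, Fintype.card_fin, Real.norm_eq_abs] using
      ContinuousMultilinearMap.le_of_opNorm_le hu2 fun _ => z
  · have hseg : ∀ t ∈ Icc (-1 : ℝ) 1, x + t • z ∈ ball x δ := fun t ht => by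
      rw [mem_ball_iff_norm, add_sub_cancel_left, norm_smul]
      exact (mul_le_of_le_one_left (norm_nonneg z) (abs_le.2 ht)).trans_lt hz
    have hx : x ∈ ball x δ := by simpa using hseg 0 (by simp)
    have hplus : x + z ∈ ball x δ := by simpa using hseg 1 (by simp)
    have hminus : x - z ∈ ball x δ := by simpa [sub_eq_add_neg] using hseg (-1) (by simp)
    rw [hφu hx, hφu hplus, hφu hminus]
    calc |u (x + z) + u (x - z) - 2 * u x - iteratedFDeriv ℝ 2 u x fun _ => z|
        ≤ M / 3 * ‖z‖ ^ 4 := norm_secondDifference_sub_le (fun t ht => hu _ (hseg t ht))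
          (fun t ht => hu4 _ (hseg t ht))
      _ = M / 3 * ‖z‖ ^ 2 * ‖z‖ ^ 2 := by ring
      _ ≤ M / 3 * δ ^ 2 * ‖z‖ ^ 2 := by gcongr

theorem two_mul_integral_sub_le_nonlocalLap_mul_cutoff [InnerProductSpace ℝ E]
    (hG : EvenKernel ν δ G) (hm : SymmetricCutoff r m) (hφ : BoundedMeasurable φ)
    (hφx : ∀ y ∈ ball x δ, φ y = ‖y‖ ^ 2) :
    2 * (∫ z, ‖z‖ ^ 2 * G z ∂ν - annularMoment ν r δ G) ≤
      nonlocalLap ν (fun z => G z * m z) φ x := by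
  have hcons := abs_nonlocalLap_mul_cutoff_sub_integral_le (K := 0) (P := 2) (x := x)
    (Q := fun z => 2 * ‖z‖ ^ 2) hG hm hφ (by fun_prop)
    (fun z => (abs_of_nonneg (by positivity)).le) le_rfl fun z hz => by
      have hx : x ∈ ball x δ := mem_ball_self ((norm_nonneg z).trans_lt hz)
      have hplus : x + z ∈ ball x δ := by rwa [mem_ball_iff_norm, add_sub_cancel_left]
      have hminus : x - z ∈ ball x δ := by
        rwa [mem_ball_iff_norm, sub_sub_cancel_left, norm_neg]
      rw [hφx _ hx, hφx _ hplus, hφx _ hminus, zero_mul, abs_nonpos_iff]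
      linarith [parallelogram_law_with_norm ℝ x z, sq ‖x + z‖, sq ‖x - z‖, sq ‖x‖, sq ‖z‖]
  simp only [mul_assoc, integral_const_mul, zero_mul, zero_add] at hcons
  linarith [(abs_le.1 hcons).1]

end Consistency

namespace RadialKernel

variable {d : ℕ} [NeZero d] {δ : ℝ} {γ : ℝ → ℝ}

lemma integrable_norm (hγ : RadialKernel d δ γ) :
    Integrable fun z : EuclideanSpace ℝ (Fin d) => γ ‖z‖ := by
  obtain ⟨-, -, hzero, hint, -⟩ := hγ
  have hsupp : (Function.support fun z : EuclideanSpace ℝ (Fin d) => γ ‖z‖) ⊆ ball 0 δ :=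
    fun z hz => mem_ball_zero_iff.2 (not_le.1 fun h => hz (hzero _ h))
  rw [← integrableOn_iff_integrable_of_support_subset hsupp, integrableOn_fun_norm_addHaar]
  exact hint.continuousOn_mul_of_subset (continuousOn_pow _) isCompact_Icc measurableSet_Ioo
    Ioo_subset_Icc_self

lemma evenKernel (hγ : RadialKernel d δ γ) :
    EvenKernel (volume : Measure (EuclideanSpace ℝ (Fin d))) δ fun z => γ ‖z‖ where
  integrable := hγ.integrable_norm
  nonneg := by
    filter_upwards [compl_mem_ae_iff.2 (measure_singleton (0 : EuclideanSpace ℝ (Fin d)))] with z hz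
    rcases lt_or_ge ‖z‖ δ with h | h
    · exact (hγ.2.1 _ (norm_pos_iff.2 hz) h).le
    · exact (hγ.2.2.1 _ h).ge
  neg z := by rw [norm_neg]
  eq_zero_of_le_norm _ hz := hγ.2.2.1 _ hz

lemma integral_norm_sq_mul (hγ : RadialKernel d δ γ) :
    ∫ z : EuclideanSpace ℝ (Fin d), ‖z‖ ^ 2 * γ ‖z‖ = d := by
  obtain ⟨-, -, hzero, -, hmom⟩ := hγ
  have hd : d - 1 + 2 = d + 1 := by have := NeZero.pos d; omega
  rw [integral_fun_norm_addHaar volume fun s => s ^ 2 * γ s, finrank_euclideanSpace_fin]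
  simp only [smul_eq_mul, nsmul_eq_mul, ← mul_assoc, ← pow_add, hd]
  rw [setIntegral_eq_of_subset_of_forall_sdiff_eq_zero measurableSet_Ioi Ioo_subset_Ioi_self
    fun s hs => by rw [hzero s (not_lt.1 fun h => hs.2 ⟨hs.1, h⟩), mul_zero]]
  exact hmom

lemma integral_iteratedFDeriv_two_mul (hγ : RadialKernel d δ γ)
    (u : EuclideanSpace ℝ (Fin d) → ℝ) (x : EuclideanSpace ℝ (Fin d)) :
    ∫ z, (iteratedFDeriv ℝ 2 u x fun _ => z) * γ ‖z‖ = lap d u x := by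
  have hd : (d : ℝ) ≠ 0 := NeZero.ne _
  have hmoments : ∀ v w : EuclideanSpace ℝ (Fin d),
      Integrable fun z => inner ℝ v z * inner ℝ w z * γ ‖z‖ := fun v w =>
    hγ.evenKernel.integrable_mul (P := ‖v‖ * ‖w‖) (by fun_prop) fun z => by
      rw [abs_mul, sq, mul_mul_mul_comm]
      gcongr <;> exact abs_real_inner_le_norm _ _
  have htrace := card_mul_integral_bilin_mul_norm hmoments (EuclideanSpace.basisFun (Fin d) ℝ)
    (fderiv ℝ (fderiv ℝ u) x)
  rw [hγ.integral_norm_sq_mul, Fintype.card_fin, mul_comm, mul_left_inj' hd] at htrace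
  simpa only [lap, iteratedFDeriv_two_apply, EuclideanSpace.basisFun_apply, Matrix.cons_val_zero,
    Matrix.cons_val_one] using htrace

end RadialKernel

section Collar

lemma infDist_frontier_le_dist {E : Type*} [NormedAddCommGroup E] [NormedSpace ℝ E]
    [FiniteDimensional ℝ E] {s : Set E} {x y : E} (hx : x ∈ s) (hy : y ∉ s) :
    infDist y (frontier s) ≤ dist y x := by
  obtain ⟨p, hp, hyp⟩ := exists_mem_frontier_infDist_compl_eq_dist (s := sᶜ) hy
    (compl_ne_univ.2 ⟨x, hx⟩)
  rw [frontier_compl] at hp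
  rw [compl_compl] at hyp
  calc infDist y (frontier s) ≤ dist y p := infDist_le_dist_of_mem hp
    _ = infDist y s := hyp.symm
    _ ≤ dist y x := infDist_le_dist_of_mem hx

variable {d : ℕ} {Ω : Set (EuclideanSpace ℝ (Fin d))} {δ : ℝ} {x : EuclideanSpace ℝ (Fin d)}

lemma measurableSet_hatΩ (hΩ : MeasurableSet Ω) : MeasurableSet (hatΩ Ω δ) :=
  hΩ.union (hΩ.compl.inter (measurableSet_lt measurable_infDist measurable_const))

lemma ball_subset_hatΩ (hx : x ∈ Ω) : ball x δ ⊆ hatΩ Ω δ := fun _ hy =>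
  or_iff_not_imp_left.2 fun hyΩ => ⟨hyΩ, (infDist_frontier_le_dist hx hyΩ).trans_lt hy⟩

lemma hatΩ_subset_thickening [NeZero d] (hΩ : Bornology.IsBounded Ω) (hne : Ω.Nonempty)
    (hδ : 0 < δ) : hatΩ Ω δ ⊆ thickening δ Ω := by
  -- `infDist y ∅ = 0`, so an empty frontier would make `omegaC Ω δ` unbounded.
  have hfr : (frontier Ω).Nonempty := nonempty_frontier_iff.2
    ⟨hne, fun h => NormedSpace.unbounded_univ ℝ (EuclideanSpace ℝ (Fin d)) (h ▸ hΩ)⟩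
  rintro _ (hy | ⟨-, hy⟩)
  · exact self_subset_thickening hδ Ω hy
  · rw [← thickening_closure]
    exact thickening_subset_of_subset δ frontier_subset_closure
      ((mem_thickening_iff_infDist_lt hfr).2 hy)

lemma boundedMeasurable_indicator_hatΩ (hΩ : MeasurableSet Ω)
    (hb : Bornology.IsBounded (hatΩ Ω δ)) {u : EuclideanSpace ℝ (Fin d) → ℝ}
    (hu : ∀ y ∈ closure (hatΩ Ω δ), ContinuousAt u y) :
    BoundedMeasurable ((hatΩ Ω δ).indicator u) :=
  .indicator_of_continuousOn_closure (measurableSet_hatΩ hΩ) hb.isCompact_closure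
    (continuousOn_of_forall_continuousAt hu)

end Collar

section ErrorEstimate

variable {d : ℕ} {Ω : Set (EuclideanSpace ℝ (Fin d))} {δ r θ R : ℝ}

/-- The comparison function of the error estimate: `‖y‖²`, normalised so that its nonlocal
Laplacian is at least `1` on `Ω` whenever the annular moment is at most `θ`. -/
def barrier (Ω : Set (EuclideanSpace ℝ (Fin d))) (δ θ : ℝ) : EuclideanSpace ℝ (Fin d) → ℝ :=
  (2 * (d - θ))⁻¹ • (hatΩ Ω δ).indicator fun y => ‖y‖ ^ 2

lemma barrier_mem_Icc (hθ : θ < d) (hR : ∀ y ∈ hatΩ Ω δ, ‖y‖ ≤ R)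
    (x : EuclideanSpace ℝ (Fin d)) : barrier Ω δ θ x ∈ Icc 0 (R ^ 2 / (2 * (d - θ))) := by
  have hdθ : 0 < 2 * (d - θ) := by linarith
  have hind : (hatΩ Ω δ).indicator (fun y => ‖y‖ ^ 2) x ∈ Icc 0 (R ^ 2) := by
    by_cases hx : x ∈ hatΩ Ω δ
    · rw [indicator_of_mem hx]
      exact ⟨by positivity, pow_le_pow_left₀ (norm_nonneg x) (hR x hx) 2⟩
    · rw [indicator_of_notMem hx]
      exact ⟨le_rfl, sq_nonneg R⟩
  rw [barrier, Pi.smul_apply, smul_eq_mul, inv_mul_eq_div]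
  exact ⟨div_nonneg hind.1 hdθ.le, div_le_div_of_nonneg_right hind.2 hdθ.le⟩

section Pointwise

variable [NeZero d] {γ : ℝ → ℝ} {m : EuclideanSpace ℝ (Fin d) → ℝ}
  {x : EuclideanSpace ℝ (Fin d)} (hΩ : MeasurableSet Ω) (hb : Bornology.IsBounded (hatΩ Ω δ))
  (hγ : RadialKernel d δ γ) (hm : SymmetricCutoff r m) (hx : x ∈ Ω)
include hΩ hb hγ hm hx

lemma one_le_nonlocalLap_barrier (hθ : θ < d)
    (hD : annularMoment volume r δ (fun z : EuclideanSpace ℝ (Fin d) => γ ‖z‖) ≤ θ) :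
    1 ≤ nonlocalLap volume (fun z => γ ‖z‖ * m z) (barrier Ω δ θ) x := by
  have hquad := two_mul_integral_sub_le_nonlocalLap_mul_cutoff (x := x) hγ.evenKernel hm
    (boundedMeasurable_indicator_hatΩ hΩ hb fun _ _ => by fun_prop)
    fun y hy => indicator_of_mem (ball_subset_hatΩ hx hy) _
  rw [hγ.integral_norm_sq_mul] at hquad
  rw [barrier, nonlocalLap_const_smul, inv_mul_eq_div, one_le_div (by linarith)]
  linarith

variable {u₀ : EuclideanSpace ℝ (Fin d) → ℝ} {M : ℝ}
  (hu₀ : ∀ y ∈ closure (hatΩ Ω δ), ContDiffAt ℝ 4 u₀ y)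
  (hu2 : ‖iteratedFDeriv ℝ 2 u₀ x‖ ≤ M) (hu4 : ∀ y ∈ hatΩ Ω δ, ‖iteratedFDeriv ℝ 4 u₀ y‖ ≤ M)
include hu₀ hu2 hu4

theorem abs_nonlocalLap_indicator_sub_lap_le :
    |nonlocalLap volume (fun z => γ ‖z‖ * m z) ((hatΩ Ω δ).indicator u₀) x - lap d u₀ x| ≤
      M / 3 * δ ^ 2 * d +
        M * annularMoment volume r δ (fun z : EuclideanSpace ℝ (Fin d) => γ ‖z‖) := by
  have hball := ball_subset_hatΩ (δ := δ) hx
  have hcons := abs_nonlocalLap_mul_cutoff_sub_integral_iteratedFDeriv_le hγ.evenKernel hm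
    (boundedMeasurable_indicator_hatΩ hΩ hb fun y hy => (hu₀ y hy).continuousAt)
    (fun y hy => indicator_of_mem (hball hy) u₀) (fun y hy => hu₀ y (subset_closure (hball hy)))
    ((norm_nonneg _).trans hu2) (fun y hy => hu4 y (hball hy)) hu2
  rwa [hγ.integral_norm_sq_mul, hγ.integral_iteratedFDeriv_two_mul] at hcons

theorem abs_nonlocalLap_indicator_sub_indicator_le {u k : EuclideanSpace ℝ (Fin d) → ℝ} {τ : ℝ}
    (hu : BoundedMeasurable ((hatΩ Ω δ).indicator u))
    (hk : ∀ᵐ z ∂volume, k (x + z) = γ ‖z‖ * m z)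
    (hτ : |2 * (∫ y in hatΩ Ω δ, (u y - u x) * k y) - lap d u₀ x| ≤ τ) :
    |nonlocalLap volume (fun z => γ ‖z‖ * m z)
        ((hatΩ Ω δ).indicator u - (hatΩ Ω δ).indicator u₀) x| ≤
      τ + (M / 3 * δ ^ 2 * d +
        M * annularMoment volume r δ (fun z : EuclideanSpace ℝ (Fin d) => γ ‖z‖)) := by
  have hw := hγ.evenKernel.mul_cutoff hm
  have hw0 : ∀ z, x + z ∉ hatΩ Ω δ → γ ‖z‖ * m z = 0 := fun z hz =>
    hw.eq_zero_of_le_norm z <| not_lt.1 fun h =>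
      hz (ball_subset_hatΩ hx (by rwa [mem_ball_iff_norm, add_sub_cancel_left]))
  rw [two_mul_setIntegral_eq_nonlocalLap (measurableSet_hatΩ hΩ) (Or.inl hx) hk hw0] at hτ
  rw [nonlocalLap_sub hw.integrable hu
    (boundedMeasurable_indicator_hatΩ hΩ hb fun y hy => (hu₀ y hy).continuousAt)]
  have hcons := abs_nonlocalLap_indicator_sub_lap_le hΩ hb hγ hm hx hu₀ hu2 hu4
  rw [abs_sub_comm] at hcons
  exact (abs_sub_le _ (lap d u₀ x) _).trans (add_le_add hτ hcons)

end Pointwise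

theorem abs_sub_le_of_abs_residual_le [NeZero d] (hΩ : MeasurableSet Ω)
    (hb : Bornology.IsBounded (hatΩ Ω δ)) {γ : ℝ → ℝ} (hγ : RadialKernel d δ γ)
    {m k : EuclideanSpace ℝ (Fin d) → EuclideanSpace ℝ (Fin d) → ℝ}
    {u u₀ : EuclideanSpace ℝ (Fin d) → ℝ} {M τ β : ℝ}
    (hm : ∀ x ∈ Ω, SymmetricCutoff r (m x))
    (hk : ∀ x ∈ Ω, ∀ᵐ z ∂volume, k x (x + z) = γ ‖z‖ * m x z)
    (hu₀ : ∀ y ∈ closure (hatΩ Ω δ), ContDiffAt ℝ 4 u₀ y)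
    (hu2 : ∀ x ∈ Ω, ‖iteratedFDeriv ℝ 2 u₀ x‖ ≤ M)
    (hu4 : ∀ y ∈ hatΩ Ω δ, ‖iteratedFDeriv ℝ 4 u₀ y‖ ≤ M) (hθ : θ < d)
    (hD : annularMoment volume r δ (fun z : EuclideanSpace ℝ (Fin d) => γ ‖z‖) ≤ θ)
    (hR : ∀ y ∈ hatΩ Ω δ, ‖y‖ ≤ R) (hu : BoundedMeasurable ((hatΩ Ω δ).indicator u))
    (hτ : ∀ x ∈ Ω, |2 * (∫ y in hatΩ Ω δ, (u y - u x) * k x y) - lap d u₀ x| ≤ τ)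
    (hβ : 0 ≤ β) (hout : ∀ y ∈ omegaC Ω δ, |u y - u₀ y| ≤ β)
    {x : EuclideanSpace ℝ (Fin d)} (hx : x ∈ Ω) :
    |u x - u₀ x| ≤ β + (τ + (M / 3 * δ ^ 2 * d +
      M * annularMoment volume r δ (fun z : EuclideanSpace ℝ (Fin d) => γ ‖z‖))) *
        (R ^ 2 / (2 * (d - θ))) := by
  set e := (hatΩ Ω δ).indicator u - (hatΩ Ω δ).indicator u₀ with he
  have heq : ∀ y ∈ hatΩ Ω δ, e y = u y - u₀ y := fun y hy => by
    simp only [he, Pi.sub_apply, indicator_of_mem hy]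
  have hLe : ∀ y ∈ Ω, |nonlocalLap volume (fun z => γ ‖z‖ * m y z) e y| ≤ _ := fun y hy =>
    abs_nonlocalLap_indicator_sub_indicator_le hΩ hb hγ (hm y hy) hy hu₀ (hu2 y hy) hu4 hu
      (hk y hy) (hτ y hy)
  have heΩ : ∀ y ∉ Ω, |e y| ≤ β := fun y hy => by
    by_cases hyH : y ∈ hatΩ Ω δ
    · exact heq y hyH ▸ hout y (hyH.resolve_left hy)
    · simpa only [he, Pi.sub_apply, indicator_of_notMem hyH, sub_zero, abs_zero] using hβ
  rw [← heq x (Or.inl hx)]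
  exact abs_le_add_mul_of_abs_nonlocalLap_le
    (fun y hy => hγ.evenKernel.jumpWeight_mul_cutoff (hm y hy))
    (hu.sub (boundedMeasurable_indicator_hatΩ hΩ hb fun y hy => (hu₀ y hy).continuousAt))
    ((boundedMeasurable_indicator_hatΩ hΩ hb fun _ _ => by fun_prop).const_smul _)
    (barrier_mem_Icc hθ hR) ((abs_nonneg _).trans (hLe x hx))
    (fun y hy => one_le_nonlocalLap_barrier hΩ hb hγ (hm y hy) hy hθ hD) hLe heΩ x

end ErrorEstimate

theorem stmt17_general {d : ℕ} [NeZero d] {Ω : Set (EuclideanSpace ℝ (Fin d))}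
    (hΩb : Bornology.IsBounded Ω) (hΩo : IsOpen Ω) {δ₀ θ A B M : ℝ} (hθ : θ < d)
    (hA : 0 < A) (hB : 0 < B) (hM : 0 < M) :
    ∃ C > 0, ∀ δ ∈ Ioc 0 δ₀, ∀ r : ℝ, ∀ γ : ℝ → ℝ, RadialKernel d δ γ →
      ∀ D : ℝ, D = annularMoment volume r δ (fun z : EuclideanSpace ℝ (Fin d) => γ ‖z‖) → D ≤ θ →
      ∀ k : EuclideanSpace ℝ (Fin d) → EuclideanSpace ℝ (Fin d) → ℝ,
        (∀ x ∈ Ω, ∃ m : EuclideanSpace ℝ (Fin d) → ℝ, SymmetricCutoff r m ∧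
          ∀ᵐ z ∂volume, k x (x + z) = γ ‖z‖ * m z) →
      ∀ u₀ : EuclideanSpace ℝ (Fin d) → ℝ,
        (∀ y ∈ closure (hatΩ Ω δ), ContDiffAt ℝ 4 u₀ y) →
        (∀ x ∈ Ω, ‖iteratedFDeriv ℝ 2 u₀ x‖ ≤ M) →
        (∀ y ∈ hatΩ Ω δ, ‖iteratedFDeriv ℝ 4 u₀ y‖ ≤ M) →
      ∀ f : EuclideanSpace ℝ (Fin d) → ℝ, (∀ x ∈ Ω, |f x - (-(lap d u₀ x))| ≤ A * δ ^ 2) →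
      ∀ g : EuclideanSpace ℝ (Fin d) → ℝ, (∀ x ∈ omegaC Ω δ, |g x - u₀ x| ≤ B * δ ^ 2) →
      ∀ u : EuclideanSpace ℝ (Fin d) → ℝ, Measurable u →
        (∃ N : ℝ, ∀ x ∈ hatΩ Ω δ, |u x| ≤ N) →
        (∀ x ∈ Ω, -(2 * ∫ y in hatΩ Ω δ, (u y - u x) * k x y) = f x) →
        (∀ x ∈ omegaC Ω δ, u x = g x) →
      ∀ x ∈ Ω, |u x - u₀ x| ≤ C * (δ ^ 2 + D) := by
  obtain ⟨R, hR⟩ := (hΩb.thickening (δ := δ₀)).exists_norm_le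
  have hS : 0 ≤ R ^ 2 / (2 * (d - θ)) := div_nonneg (sq_nonneg R) (by linarith)
  refine ⟨B + (A + M * (d / 3 + 1)) * (R ^ 2 / (2 * (d - θ))), by positivity, ?_⟩
  rintro δ ⟨hδ, hδδ₀⟩ r γ hγ D rfl hD k hk u₀ hu₀ hu2 hu4 f hf g hg u hu huN heq hbd x hx
  choose! m hm hkm using hk
  have hH : hatΩ Ω δ ⊆ thickening δ₀ Ω :=
    (hatΩ_subset_thickening hΩb ⟨x, hx⟩ hδ).trans (thickening_mono hδδ₀ Ω)
  have hΩ := hΩo.measurableSet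
  have hτ : ∀ y ∈ Ω, |2 * (∫ z in hatΩ Ω δ, (u z - u y) * k y z) - lap d u₀ y| ≤ A * δ ^ 2 :=
    fun y hy => by rw [← abs_neg, neg_sub', heq y hy]; exact hf y hy
  have herr := abs_sub_le_of_abs_residual_le hΩ (hΩb.thickening.subset hH) hγ hm hkm hu₀ hu2 hu4 hθ
    hD (fun y hy => hR y (hH hy)) (.indicator (measurableSet_hatΩ hΩ) hu huN) hτ (by positivity)
    (fun y hy => hbd y hy ▸ hg y hy) hx
  set D := annularMoment volume r δ fun z : EuclideanSpace ℝ (Fin d) => γ ‖z‖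
  have hD0 : 0 ≤ D := hγ.evenKernel.annularMoment_nonneg
  set S := R ^ 2 / (2 * (d - θ))
  refine herr.trans (sub_nonneg.1 ?_)
  ring_nf
  positivity

/-- uniform-norm error estimate for nonlocal problems with symmetric
polygonal interaction neighborhoods. -/
theorem stmt17 (Ω : Set (EuclideanSpace ℝ (Fin 2)))
    (hΩb : Bornology.IsBounded Ω) (hΩo : IsOpen Ω)
    (δ₀ : ℝ) (hδ₀ : δ₀ ∈ Ioc (0 : ℝ) 1) (μ : ℕ) (hμ : μ = 0 ∨ μ = 1)
    (A B M : ℝ) (hA : 0 < A) (hB : 0 < B) (hM : 0 < M) :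
    ∃ C > 0, ∀ δ ∈ Ioc (0 : ℝ) δ₀, ∀ r ∈ Icc (δ / 2) δ,
      ∀ γ : ℝ → ℝ, RadialKernel 2 δ γ →
      IntegrableOn (fun z : EuclideanSpace ℝ (Fin 2) => γ ‖z‖) (ball 0 δ) →
      ∀ D : ℝ,
        D = (∫ z in {z : EuclideanSpace ℝ (Fin 2) | r ≤ ‖z‖ ∧ ‖z‖ ≤ δ},
          ‖z‖ ^ 2 * γ ‖z‖) →
        D ≤ 1 / 2 →
      ∀ k : EuclideanSpace ℝ (Fin 2) → EuclideanSpace ℝ (Fin 2) → ℝ,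
        Measurable (Function.uncurry k) →
        (∀ x ∈ hatΩ Ω δ, ∀ y ∈ hatΩ Ω δ, 0 ≤ k x y) →
        (∀ x ∈ Ω, ∃ m : EuclideanSpace ℝ (Fin 2) → ℝ, Measurable m ∧
          (∀ z, m z ∈ Icc (0 : ℝ) 1) ∧ (∀ z, m (-z) = m z) ∧
          (∀ z, ‖z‖ ≤ r → m z = 1) ∧ (∀ z, δ ≤ ‖z‖ → m z = 0) ∧
          (∀ᵐ z ∂volume, k x (x + z) = γ ‖z‖ * m z)) →
      ∀ u₀ : EuclideanSpace ℝ (Fin 2) → ℝ,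
        (∃ V, IsOpen V ∧ closure (hatΩ Ω δ) ⊆ V ∧ ContDiffOn ℝ 4 u₀ V) →
        (∀ y ∈ hatΩ Ω δ, ∀ j ≤ 4, ‖iteratedFDeriv ℝ j u₀ y‖ ≤ M) →
      ∀ f : EuclideanSpace ℝ (Fin 2) → ℝ,
        (∀ x ∈ Ω, |f x - (-(lap 2 u₀ x))| ≤ A * δ ^ 2) →
      ∀ g : EuclideanSpace ℝ (Fin 2) → ℝ,
        (∀ x ∈ omegaC Ω δ, |g x - u₀ x| ≤ B * δ ^ (2 + μ)) →
      ∀ u : EuclideanSpace ℝ (Fin 2) → ℝ, Measurable u →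
        (∃ Mu : ℝ, ∀ x ∈ hatΩ Ω δ, |u x| ≤ Mu) →
        (∀ x ∈ Ω, -(2 * ∫ y in hatΩ Ω δ, (u y - u x) * k x y) = f x) →
        (∀ x ∈ omegaC Ω δ, u x = g x) →
      ∀ x ∈ Ω, |u x - u₀ x| ≤ C * (δ ^ 2 + D) := by
  obtain ⟨C, hC, hmain⟩ := stmt17_general (δ₀ := δ₀) (θ := 1 / 2) hΩb hΩo (by norm_num) hA hB hM
  refine ⟨C, hC, fun δ hδ r _ γ hγ _ D hD hD' k _ _ hk u₀ ⟨V, hV, hHV, hu₀⟩ huM f hf g hg => ?_⟩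
  exact hmain δ hδ r γ hγ D hD hD' k
    (fun x hx => let ⟨m, h, hI, hn, h1, _, hk⟩ := hk x hx; ⟨m, ⟨h, hI, hn, h1⟩, hk⟩) u₀
    (fun y hy => hu₀.contDiffAt (hV.mem_nhds (hHV hy))) (fun y hy => huM y (Or.inl hy) 2 (by simp))
    (fun y hy => huM y hy 4 le_rfl) f hf g fun y hy => (hg y hy).trans (by
      gcongr ?_ * ?_
      exact pow_le_pow_of_le_one hδ.1.le (hδ.2.trans hδ₀.2) (Nat.le_add_right 2 μ))
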